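/- (Theorem 5.) Consider the batch test that accepts H_1 if and only if T(x_1^s) = Σ_k |E_{P̂_s}[ψ_k] − E_{Q̂_0}[ψ_k]|² − Σ_k |E_{P̂_s}[ψ_k] − E_{Q̂_1}[ψ_k]|² ≥ 0. If δ := inf_{P_0 ∈ 𝒫_0^η} Σ_k [(E_{Q̂_1}[ψ_k] − E_{P_0}[ψ_k])² − (E_{Q̂_0}[ψ_k] − E_{P_0}[ψ_k])²] > 0, then the worst-case type-I error decays exponentially in the batch size s: sup_{P_0 ∈ 𝒫_0^η} P_0^{⊗s}(T(x_1^s) ≥ 0) ≤ exp( − s δ² / (8 M² (Σ_k |E_{Q̂_1}[ψ_k] − E_{Q̂_0}[ψ_k]|)²) ). -/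

import Mathlib

open MeasureTheory

/-- The moment-constrained uncertainty set under `H₀` around nominal `Q0`. -/
def momentSet {d : ℕ} (X : Set (EuclideanSpace ℝ (Fin d))) {K : ℕ}
    (ψ : Fin K → X → ℝ) (Q0 : ProbabilityMeasure X) (η : ℝ) :
    Set (ProbabilityMeasure X) :=
  {P | ∀ k, |∫ x, ψ k x ∂(P : Measure X) - ∫ x, ψ k x ∂(Q0 : Measure X)| ≤ η}

/-!
The map `m ↦ ∑ k, ((E₁ k - m k) ^ 2 - (E₀ k - m k) ^ 2)` is affine, because its quadratic terms
cancel. It is at least `δ` at the true moments and at most `0` at the empirical moments of a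
misclassified batch, so on a type-I error the empirical mean of the scalar function
`∑ k, (E₁ k - E₀ k) * ψ k` exceeds its expectation by at least `δ / 2`. This function is bounded
by `M * ∑ k, |E₁ k - E₀ k|`, and Hoeffding's inequality applies.
-/

open ProbabilityTheory

theorem bddBelow_of_sInf_ne_zero {S : Set ℝ} (hS : sInf S ≠ 0) : BddBelow S :=
  not_imp_comm.1 Real.sInf_of_not_bddBelow hS

section Hoeffding

theorem measureReal_pi_sum_sub_integral_ge_le {ι : Type*} [Fintype ι] {Ω : ι → Type*}
    [∀ i, MeasurableSpace (Ω i)] (P : ∀ i, Measure (Ω i)) [∀ i, IsProbabilityMeasure (P i)]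
    {f : ∀ i, Ω i → ℝ} (hf : ∀ i, AEMeasurable (f i) (P i)) {a b : ι → ℝ}
    (hab : ∀ i, ∀ᵐ x ∂P i, f i x ∈ Set.Icc (a i) (b i)) {ε : ℝ} (hε : 0 ≤ ε) :
    (Measure.pi P).real {ω | ε ≤ ∑ i, (f i (ω i) - ∫ x, f i x ∂P i)} ≤
      Real.exp (-2 * ε ^ 2 / ∑ i, (b i - a i) ^ 2) := by
  have hindep : iIndepFun (fun i ω => f i (ω i) - ∫ x, f i x ∂P i) (Measure.pi P) :=
    iIndepFun_pi (X := fun i x => f i x - ∫ x, f i x ∂P i) fun i => (hf i).sub_const _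
  have hsub (i : ι) : HasSubgaussianMGF (fun ω => f i (ω i) - ∫ x, f i x ∂P i)
      ((‖b i - a i‖₊ / 2) ^ 2) (Measure.pi P) := by
    have heval := measurePreserving_eval P i
    exact .of_map (X := fun x => f i x - ∫ x, f i x ∂P i) heval.measurable.aemeasurable
      (heval.map_eq.symm ▸ hasSubgaussianMGF_of_mem_Icc (hf i) (hab i))
  refine (HasSubgaussianMGF.measure_sum_ge_le_of_iIndepFun hindep (s := Finset.univ)
    (fun i _ => hsub i) hε).trans_eq ?_
  have hvar : 2 * ((∑ i, (‖b i - a i‖₊ / 2) ^ 2 : NNReal) : ℝ) =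
      (∑ i, (b i - a i) ^ 2) / 2 := by
    simp only [NNReal.coe_sum, NNReal.coe_pow, NNReal.coe_div, coe_nnnorm, NNReal.coe_ofNat,
      Real.norm_eq_abs, div_pow, sq_abs, Finset.mul_sum, Finset.sum_div]
    exact Finset.sum_congr rfl fun i _ => by ring
  rw [hvar, div_div_eq_mul_div]
  ring_nf

variable {Ω : Type*} [MeasurableSpace Ω] (P : Measure Ω) [IsProbabilityMeasure P]

theorem measureReal_pi_mean_sub_integral_ge_le {f : Ω → ℝ} (hf : AEMeasurable f P) {B : ℝ}
    (hB : ∀ᵐ x ∂P, |f x| ≤ B) {s : ℕ} (hs : s ≠ 0) {ε : ℝ} (hε : 0 ≤ ε) :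
    (Measure.pi fun _ : Fin s => P).real
        {ω | ε ≤ (s : ℝ)⁻¹ * ∑ j, f (ω j) - ∫ x, f x ∂P} ≤
      Real.exp (-(s : ℝ) * ε ^ 2 / (2 * B ^ 2)) := by
  have hs' : (0 : ℝ) < s := by positivity
  have hset : {ω : Fin s → Ω | ε ≤ (s : ℝ)⁻¹ * ∑ j, f (ω j) - ∫ x, f x ∂P} =
      {ω | s * ε ≤ ∑ j, (f (ω j) - ∫ x, f x ∂P)} := by
    ext ω
    have hmean : ∑ j, (f (ω j) - ∫ x, f x ∂P) =
        s * ((s : ℝ)⁻¹ * ∑ j, f (ω j) - ∫ x, f x ∂P) := by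
      rw [mul_sub, mul_inv_cancel_left₀ hs'.ne', Finset.sum_sub_distrib, Fin.sum_const,
        nsmul_eq_mul]
    rw [Set.mem_ofPred_eq, Set.mem_ofPred_eq, hmean, mul_le_mul_iff_right₀ hs']
  rw [hset]
  refine (measureReal_pi_sum_sub_integral_ge_le (fun _ => P) (fun _ => hf)
    (fun _ => hB.mono fun x hx => abs_le.1 hx) (by positivity)).trans_eq ?_
  rw [Fin.sum_const, nsmul_eq_mul, ← mul_div_mul_left (-(s : ℝ) * ε ^ 2) _
    (show (2 * s : ℝ) ≠ 0 by positivity)]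
  ring_nf

end Hoeffding

section Moments

variable {ι : Type*} [Fintype ι]

theorem abs_dotProduct_le_mul_sum_abs (w : ι → ℝ) {v : ι → ℝ} {M : ℝ} (hv : ∀ k, |v k| ≤ M) :
    |w ⬝ᵥ v| ≤ M * ∑ k, |w k| :=
  calc |w ⬝ᵥ v| ≤ ∑ k, |w k * v k| := Finset.abs_sum_le_sum_abs _ _
    _ ≤ ∑ k, M * |w k| := Finset.sum_le_sum fun k _ => by
      rw [abs_mul, mul_comm]
      exact mul_le_mul_of_nonneg_right (hv k) (abs_nonneg _)
    _ = M * ∑ k, |w k| := (Finset.mul_sum ..).symm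

/-- The amount by which the moment vector `m` is closer, in squared Euclidean distance, to `E0`
than to `E1`. The test statistic `T` is its negative at the empirical moments, and `δ` is its
infimum over the moments of the uncertainty set. -/
def momentGap (E0 E1 m : ι → ℝ) : ℝ :=
  ∑ k, ((E1 k - m k) ^ 2 - (E0 k - m k) ^ 2)

theorem momentGap_nonpos_iff {E0 E1 m : ι → ℝ} :
    momentGap E0 E1 m ≤ 0 ↔ ∑ k, |m k - E1 k| ^ 2 ≤ ∑ k, |m k - E0 k| ^ 2 := by
  simp only [momentGap, Finset.sum_sub_distrib, sub_nonpos, sq_abs, sub_sq_comm (m _)]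

theorem momentGap_sub_momentGap (E0 E1 m m' : ι → ℝ) :
    momentGap E0 E1 m - momentGap E0 E1 m' = 2 * ((E1 - E0) ⬝ᵥ (m' - m)) := by
  simp only [momentGap, dotProduct, Pi.sub_apply, Finset.mul_sum, ← Finset.sum_sub_distrib]
  exact Finset.sum_congr rfl fun k _ => by ring

variable {Ω : Type*} [MeasurableSpace Ω]

theorem measureReal_pi_dotProduct_mean_sub_integral_ge_le (P : Measure Ω)
    [IsProbabilityMeasure P] {ψ : ι → Ω → ℝ} (hψ : ∀ k, AEMeasurable (ψ k) P) {M : ℝ}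
    (hM : ∀ k, ∀ᵐ x ∂P, |ψ k x| ≤ M) (w : ι → ℝ) {s : ℕ} (hs : s ≠ 0) {ε : ℝ} (hε : 0 ≤ ε) :
    (Measure.pi fun _ : Fin s => P).real {ω | ε ≤
        w ⬝ᵥ ((fun k => (s : ℝ)⁻¹ * ∑ j, ψ k (ω j)) - fun k => ∫ x, ψ k x ∂P)} ≤
      Real.exp (-(s : ℝ) * ε ^ 2 / (2 * (M * ∑ k, |w k|) ^ 2)) := by
  have hmean (ω : Fin s → Ω) : w ⬝ᵥ (fun k => (s : ℝ)⁻¹ * ∑ j, ψ k (ω j)) =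
      (s : ℝ)⁻¹ * ∑ j, w ⬝ᵥ (ψ · (ω j)) := by
    simp only [dotProduct, Finset.mul_sum, mul_left_comm (w _)]
    exact Finset.sum_comm
  have hint : w ⬝ᵥ (fun k => ∫ x, ψ k x ∂P) = ∫ x, w ⬝ᵥ (ψ · x) ∂P := by
    simp only [dotProduct, ← integral_const_mul]
    exact (integral_finsetSum _ fun k _ =>
      (Integrable.of_bound (hψ k).aestronglyMeasurable M (hM k)).const_mul _).symm
  simp only [dotProduct_sub, hmean, hint]
  exact measureReal_pi_mean_sub_integral_ge_le P
    (Finset.aemeasurable_fun_sum _ fun k _ => (hψ k).const_mul _)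
    ((ae_all_iff.2 hM).mono fun x hx => abs_dotProduct_le_mul_sum_abs w hx) hs hε

theorem measureReal_pi_momentGap_mean_nonpos_le (P : Measure Ω) [IsProbabilityMeasure P]
    {ψ : ι → Ω → ℝ} (hψ : ∀ k, AEMeasurable (ψ k) P) {M : ℝ}
    (hM : ∀ k, ∀ᵐ x ∂P, |ψ k x| ≤ M) {E0 E1 : ι → ℝ} {δ : ℝ} (hδ : 0 ≤ δ)
    (hgap : δ ≤ momentGap E0 E1 fun k => ∫ x, ψ k x ∂P) {s : ℕ} (hs : s ≠ 0) :
    (Measure.pi fun _ : Fin s => P).real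
        {ω | momentGap E0 E1 (fun k => (s : ℝ)⁻¹ * ∑ j, ψ k (ω j)) ≤ 0} ≤
      Real.exp (-(s : ℝ) * δ ^ 2 / (8 * M ^ 2 * (∑ k, |E1 k - E0 k|) ^ 2)) := by
  have hsubset : {ω : Fin s → Ω | momentGap E0 E1 (fun k => (s : ℝ)⁻¹ * ∑ j, ψ k (ω j)) ≤ 0} ⊆
      {ω | δ / 2 ≤
        (E1 - E0) ⬝ᵥ ((fun k => (s : ℝ)⁻¹ * ∑ j, ψ k (ω j)) - fun k => ∫ x, ψ k x ∂P)} := by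
    intro ω (hω : momentGap E0 E1 _ ≤ 0)
    have hdiff := momentGap_sub_momentGap E0 E1 (fun k => ∫ x, ψ k x ∂P)
      fun k => (s : ℝ)⁻¹ * ∑ j, ψ k (ω j)
    rw [Set.mem_ofPred_eq]
    linarith
  refine (measureReal_mono hsubset).trans ((measureReal_pi_dotProduct_mean_sub_integral_ge_le P
    hψ hM (E1 - E0) hs (by positivity)).trans_eq ?_)
  rw [← mul_div_mul_left (-(s : ℝ) * (δ / 2) ^ 2) _ (four_ne_zero (α := ℝ))]
  simp only [Pi.sub_apply]
  ring_nf

theorem direct_batch_test_exponentially_consistent_general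
    {ψ : ι → Ω → ℝ} (hψ : ∀ k, Measurable (ψ k)) {M : ℝ} (hM : ∀ k x, |ψ k x| ≤ M)
    {S : Set (ProbabilityMeasure Ω)} {E0 E1 : ι → ℝ} {δ : ℝ} (hδ : 0 ≤ δ)
    (hgap : ∀ P0 ∈ S, δ ≤ momentGap E0 E1 fun k => ∫ x, ψ k x ∂(P0 : Measure Ω))
    {s : ℕ} (hs : s ≠ 0) :
    (⨆ P0 ∈ S, (Measure.pi fun _ : Fin s => (P0 : Measure Ω))
        {ω : Fin s → Ω |
          ∑ k, |(s : ℝ)⁻¹ * ∑ j, ψ k (ω j) - E1 k| ^ 2 ≤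
            ∑ k, |(s : ℝ)⁻¹ * ∑ j, ψ k (ω j) - E0 k| ^ 2}) ≤
      ENNReal.ofReal (Real.exp (-(s : ℝ) * δ ^ 2 /
        (8 * M ^ 2 * (∑ k, |E1 k - E0 k|) ^ 2))) := by
  refine iSup₂_le fun P0 hP0 => ?_
  simp only [← momentGap_nonpos_iff]
  rw [← ofReal_measureReal]
  exact ENNReal.ofReal_le_ofReal (measureReal_pi_momentGap_mean_nonpos_le _
    (fun k => (hψ k).aemeasurable) (fun k => ae_of_all _ (hM k)) hδ (hgap P0 hP0) hs)

end Moments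

/-- **Theorem 5, exponential consistency of the direct batch test.**
If `δ = inf_{P₀ ∈ 𝒫₀^η} ∑_k [(E_{Q̂₁}[ψ_k] − E_{P₀}[ψ_k])² − (E_{Q̂₀}[ψ_k] − E_{P₀}[ψ_k])²] > 0`,
then the worst-case type-I error of the test accepting `H₁` iff
`T(x_1^s) = ∑_k |E_{P̂_s}[ψ_k] − E_{Q̂₀}[ψ_k]|² − ∑_k |E_{P̂_s}[ψ_k] − E_{Q̂₁}[ψ_k]|² ≥ 0`
decays exponentially in the batch size `s`. -/
theorem direct_batch_test_exponentially_consistent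
    {d : ℕ} (X : Set (EuclideanSpace ℝ (Fin d))) (hX : IsCompact X)
    {K : ℕ} (ψ : Fin K → X → ℝ) (hψ : ∀ k, Continuous (ψ k))
    (M : ℝ) (hM : ∀ k, ∀ x : X, |ψ k x| ≤ M)
    (Q0 Q1 : ProbabilityMeasure X) (η : ℝ) (hη : 0 < η)
    (E0 E1 : Fin K → ℝ)
    (hE0 : ∀ k, E0 k = ∫ x, ψ k x ∂(Q0 : Measure X))
    (hE1 : ∀ k, E1 k = ∫ x, ψ k x ∂(Q1 : Measure X))
    (δ : ℝ)
    (hδdef : δ = sInf {r : ℝ | ∃ P0 ∈ momentSet X ψ Q0 η,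
      r = ∑ k, ((E1 k - ∫ x, ψ k x ∂(P0 : Measure X)) ^ 2 -
        (E0 k - ∫ x, ψ k x ∂(P0 : Measure X)) ^ 2)})
    (hδ : 0 < δ)
    (s : ℕ) (hs : 0 < s) :
    (⨆ P0 ∈ momentSet X ψ Q0 η,
        (Measure.pi fun _ : Fin s => (P0 : Measure X))
          {ω : Fin s → X |
            ∑ k, |(s : ℝ)⁻¹ * ∑ j, ψ k (ω j) - E1 k| ^ 2 ≤
              ∑ k, |(s : ℝ)⁻¹ * ∑ j, ψ k (ω j) - E0 k| ^ 2}) ≤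
      ENNReal.ofReal (Real.exp (-(s : ℝ) * δ ^ 2 /
        (8 * M ^ 2 * (∑ k, |E1 k - E0 k|) ^ 2))) := by
  subst hδdef
  exact direct_batch_test_exponentially_consistent_general (fun k => (hψ k).measurable) hM hδ.le
    (fun P0 hP0 => csInf_le (bddBelow_of_sInf_ne_zero hδ.ne') ⟨P0, hP0, rfl⟩) hs.ne'
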